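/- If a simple graph G has u vertices of odd degree and g nonisolated vertices of even degree, then the edges of G can be partitioned into at most u/2 + ⌊(3/4)g⌋ paths; in particular at most ⌊(3/4)n⌋ paths suffice. -/

import Mathlib

/-!
A path system may contain one-vertex paths, whose vertex counts as a double end, so that rerouting
paths keeps their number fixed. Suppose all neighbors of `a`, including those in a set `X` of
missing neighbors, are ends of paths. Flipping the arms of paths at `a` trades an edge at `a` for
another one; following these trades from each `x ∈ X` until a path that misses `a` is found, one
can add the edges from `a` to at least half of `X` without any new path.

For a single missing edge this yields Lovász's theorem, which settles the graphs in which every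
nonisolated vertex of even degree is prescribed to be an end. In general, let the other nonisolated
vertices of even degree be bad. Deleting the edges from a vertex `a` to a set `X` of bad neighbors
makes the vertices of `X` odd. If `a` is bad too, the edges that cannot be put back by rerouting are
paired up into new paths of length two, paid for by the decrease of the weight, which is `2` at odd
vertices, `3` at bad ones and `4` at the prescribed even ones. If the bad vertices are independent
and `a` is good, the remaining edges `ax` are put back one at a time by rerouting at `x` instead,
and no new path is needed.
-/

namespace PathDecomposition

open Finset

section Lists

variable {V : Type*}

/-- The edges of the path that visits the vertices of `l` in order. -/
def pathEdges (l : List V) : Multiset (Sym2 V) :=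
  ↑(List.zipWith (s(·, ·)) l l.tail)

/-- The two ends of the path `l`; a one-vertex path has its vertex as a double end. -/
def pathEnds (l : List V) : Multiset V :=
  ↑(l.head?.toList ++ l.getLast?.toList)

/-- The path through `a` whose two arms, listed outwards from `a`, are `A` and `B`. -/
def joinArms (a : V) (A B : List V) : List V :=
  A.reverse ++ a :: B

/-- The arm `A`, traversed backwards if `r` holds. -/
def flipIf (r : Prop) [Decidable r] (A : List V) : List V :=
  if r then A.reverse else A

@[simp] lemma pathEdges_singleton (x : V) : pathEdges [x] = 0 := rfl

lemma pathEdges_cons_cons (x y : V) (l : List V) :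
    pathEdges (x :: y :: l) = s(x, y) ::ₘ pathEdges (y :: l) := rfl

lemma pathEdges_cons (a : V) {l : List V} (hl : l ≠ []) :
    pathEdges (a :: l) = s(a, l.headD a) ::ₘ pathEdges l := by
  obtain ⟨x, l, rfl⟩ := List.exists_cons_of_ne_nil hl
  rfl

lemma pathEdges_append_cons (A : List V) (a : V) (B : List V) :
    pathEdges (A ++ a :: B) = pathEdges (A ++ [a]) + pathEdges (a :: B) := by
  induction A with
  | nil => simp
  | cons x A ih =>
    cases A with
    | nil => simp [pathEdges_cons_cons]
    | cons y A => simpa [pathEdges_cons_cons] using ih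

lemma pathEdges_reverse (l : List V) : pathEdges l.reverse = pathEdges l := by
  induction l with
  | nil => rfl
  | cons x l ih =>
    cases l with
    | nil => rfl
    | cons y l =>
      rw [List.reverse_cons, List.reverse_cons, List.append_assoc, List.singleton_append,
        pathEdges_append_cons, ← List.reverse_cons, ih, pathEdges_cons_cons, pathEdges_cons_cons,
        pathEdges_singleton, Multiset.cons_zero, Sym2.eq_swap, ← Multiset.singleton_add, add_comm]

lemma pathEdges_joinArms (a : V) (A B : List V) :
    pathEdges (joinArms a A B) = pathEdges (a :: A) + pathEdges (a :: B) := by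
  rw [joinArms, pathEdges_append_cons, ← List.reverse_cons, pathEdges_reverse]

lemma pathEnds_cons (x : V) (l : List V) : pathEnds (x :: l) = {x} + {l.getLastD x} := by
  simp [pathEnds, List.getLast?_cons, ← Multiset.cons_coe]

lemma pathEnds_reverse (l : List V) : pathEnds l.reverse = pathEnds l := by
  rw [pathEnds, pathEnds, List.head?_reverse, List.getLast?_reverse, Multiset.coe_eq_coe]
  exact List.perm_append_comm

lemma card_pathEnds {l : List V} (hl : l ≠ []) : (pathEnds l).card = 2 := by
  obtain ⟨x, l, rfl⟩ := List.exists_cons_of_ne_nil hl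
  simp [pathEnds_cons]

lemma pathEnds_joinArms (a : V) (A B : List V) :
    pathEnds (joinArms a A B) = {A.getLastD a} + {B.getLastD a} := by
  rcases List.eq_nil_or_concat A with rfl | ⟨A, x, rfl⟩
  · exact pathEnds_cons a B
  · rw [joinArms, List.concat_eq_append, List.reverse_append]
    simp [pathEnds_cons, List.getLast?_cons]

lemma joinArms_perm (a : V) (A B : List V) : (joinArms a A B).Perm (a :: (A ++ B)) :=
  List.perm_middle.trans (((List.reverse_perm A).append_right B).cons a)

lemma exists_eq_joinArms {a : V} {l : List V} (ha : a ∈ l) : ∃ A B, l = joinArms a A B := by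
  obtain ⟨A, B, rfl⟩ := List.append_of_mem ha
  exact ⟨A.reverse, B, by simp [joinArms]⟩

lemma flipIf_perm (r : Prop) [Decidable r] (A : List V) : (flipIf r A).Perm A := by
  unfold flipIf
  split_ifs
  · exact List.reverse_perm A
  · exact List.Perm.refl A

lemma pathEdges_cons_flipIf (a : V) (r : Prop) [Decidable r] (A : List V) :
    pathEdges (a :: flipIf r A) + (if r then {s(a, A.headD a)} else 0) =
      pathEdges (a :: A) + (if r then {s(a, A.getLastD a)} else 0) := by
  unfold flipIf
  split_ifs
  · rcases eq_or_ne A [] with rfl | hA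
    · rfl
    · rw [pathEdges_cons a hA, pathEdges_cons a (List.reverse_ne_nil_iff.2 hA), pathEdges_reverse]
      simp [← Multiset.singleton_add, add_assoc, add_left_comm, add_comm]
  · rfl

lemma getLastD_flipIf (a : V) (r : Prop) [Decidable r] (A : List V) :
    {(flipIf r A).getLastD a} + (if r then {A.getLastD a} else 0) =
      ({A.getLastD a} + (if r then {A.headD a} else 0) : Multiset V) := by
  unfold flipIf
  split_ifs
  · simp [add_comm]
  · rfl

lemma mk_headD_mem_pathEdges (a : V) {A : List V} (hA : A ≠ []) :
    s(a, A.headD a) ∈ pathEdges (a :: A) := by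
  rw [pathEdges_cons a hA]
  exact Multiset.mem_cons_self _ _

/-- Orient the path so that it starts at `k`, then prepend `a`. -/
lemma exists_perm_of_mem_pathEnds {l : List V} {k : V} (hk : k ∈ pathEnds l) (a : V) :
    ∃ l' : List V, l'.Perm l ∧ pathEdges (a :: l') = {s(a, k)} + pathEdges l ∧
      pathEnds (a :: l') + {k} = pathEnds l + {a} := by
  wlog hhead : l.head? = some k generalizing l
  · have hlast : l.reverse.head? = some k := by
      simpa [pathEnds, hhead] using hk
    obtain ⟨l', hperm, hedges, hends⟩ := this (pathEnds_reverse l ▸ hk) hlast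
    rw [pathEdges_reverse] at hedges
    rw [pathEnds_reverse] at hends
    exact ⟨l', hperm.trans (List.reverse_perm l), hedges, hends⟩
  · obtain ⟨m, rfl⟩ := List.head?_eq_some_iff.1 hhead
    refine ⟨k :: m, List.Perm.refl _, rfl, ?_⟩
    rw [pathEnds_cons, pathEnds_cons, List.getLastD_cons]
    abel

end Lists

section Exchange

variable {V σ ι : Type*}

lemma sum_singleton_update_add [DecidableEq V] {B : Finset V} {x : V} (hx : x ∈ B) (y : V) :
    ∑ v ∈ B, {Function.update id x y v} + {x} = (∑ v ∈ B, {v} + {y} : Multiset V) := by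
  rw [← add_sum_erase B (fun v => {Function.update id x y v}) hx,
    ← add_sum_erase B (fun v => ({v} : Multiset V)) hx, Function.update_self,
    sum_congr rfl fun v hv => by rw [Function.update_of_ne (ne_of_mem_erase hv), id]]
  abel

/-- Follow the arcs `l s → h s` from each `x ∈ X` until a vertex `t x` of `T` is reached. Since `h`
is injective, these trails do not merge; along the trails starting in a set `B`, every vertex but
the last is some `l s` and every vertex but the first is some `h s`. -/
lemma exists_injOn_trail_ends {h l : σ → V} {T : Set V} (S : Finset σ) (X : Finset V)
    (hinj : Set.InjOn h S) (hX : ∀ s ∈ S, h s ∉ X)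
    (hcov : ∀ v, (v ∈ X ∨ ∃ s ∈ S, h s = v) → v ∈ T ∨ ∃ s ∈ S, l s = v) :
    ∃ t : V → V, Set.InjOn t X ∧ (∀ x ∈ X, t x ∈ T) ∧ ∀ B ⊆ X, ∃ R ⊆ S,
      ∑ s ∈ R, {l s} + ∑ x ∈ B, {t x} = (∑ s ∈ R, {h s} + ∑ x ∈ B, {x} : Multiset V) := by
  classical
  induction S using Finset.strongInduction generalizing X with
  | H S ih =>
  by_cases hT : ∀ x ∈ X, x ∈ T
  · exact ⟨id, Set.injOn_id _, hT, fun B _ => ⟨∅, empty_subset S, rfl⟩⟩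
  push Not at hT
  obtain ⟨x, hxX, hxT⟩ := hT
  obtain ⟨s, hs, rfl⟩ := (hcov x (.inl hxX)).resolve_left hxT
  have hne : h s ≠ l s := fun heq => hX s hs (heq ▸ hxX)
  let e : V → V := Function.update id (l s) (h s)
  have he : ∀ v, v ≠ l s → e v = v := fun v hv => Function.update_of_ne hv _ _
  have hel : e (l s) = h s := Function.update_self ..
  have heinj : Set.InjOn e X := fun v hv w hw hvw => by grind
  have hmaps : ∀ v ∈ X, e v ∈ insert (h s) (X.erase (l s)) := by grind
  obtain ⟨t, htinj, htT, hshift⟩ := ih (S.erase s) (erase_ssubset hs)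
    (insert (h s) (X.erase (l s))) (hinj.mono (erase_subset s S))
    (fun s' hs' => by
      have := hinj.ne (mem_of_mem_erase hs') hs (ne_of_mem_erase hs')
      grind)
    (fun v hv => by
      have hvl : v ≠ l s := by grind
      have hv' : v ∈ X ∨ ∃ s' ∈ S, h s' = v := by grind
      rcases hcov v hv' with hvT | ⟨s', hs', rfl⟩
      · exact .inl hvT
      · exact .inr ⟨s', mem_erase.2 ⟨by grind, hs'⟩, rfl⟩)
  refine ⟨t ∘ e, htinj.comp heinj hmaps, fun x hx => htT _ (hmaps x hx), fun B hB => ?_⟩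
  obtain ⟨R, hRS, hR⟩ := hshift (B.image e) (image_subset_iff.2 fun v hv => hmaps v (hB hv))
  rw [sum_image (heinj.mono hB), sum_image (heinj.mono hB)] at hR
  have hsR : s ∉ R := fun hsR => notMem_erase s S (hRS hsR)
  by_cases hl : l s ∈ B
  · refine ⟨insert s R, insert_subset hs (hRS.trans (erase_subset s S)), ?_⟩
    simp only [Function.comp_apply]
    rw [sum_insert hsR, sum_insert hsR, add_assoc, hR, add_left_comm, add_comm {l s},
      sum_singleton_update_add hl]
    abel
  · refine ⟨R, hRS.trans (erase_subset s S), ?_⟩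
    have hfix : ∑ v ∈ B, ({e v} : Multiset V) = ∑ v ∈ B, {v} :=
      sum_congr rfl fun v hv => by rw [he v fun hv' => hl (hv' ▸ hv)]
    rw [← hfix, ← hR, Function.comp_def]

lemma exists_injOn_half_le_card [DecidableEq ι] (X : Finset V) (f : V → ι)
    (hf : ∀ i, #{x ∈ X | f x = i} ≤ 2) :
    ∃ B ⊆ X, Set.InjOn f B ∧ #X ≤ 2 * #B := by
  obtain ⟨B, hBX, hinj, himage⟩ :=
    exists_subset_injOn_image_eq_of_surjOn X (X.image f) (f := f) (by simp [Set.SurjOn])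
  refine ⟨B, by simpa using hBX, hinj, ?_⟩
  have := card_le_mul_card_image X 2 (f := f) (fun i _ => hf i)
  rwa [← himage, card_image_of_injOn hinj] at this

/-- Among the trail ends, at least half can be chosen to lie in different sets `E i`. -/
lemma exists_exchange [Nonempty V] {h l : σ → V} {E : ι → Multiset V} (hE : ∀ i, (E i).card ≤ 2)
    {S : Finset σ} {X : Finset V} (hinj : Set.InjOn h S) (hX : ∀ s ∈ S, h s ∉ X)
    (hcov : ∀ v, (v ∈ X ∨ ∃ s ∈ S, h s = v) → (∃ i, v ∈ E i) ∨ ∃ s ∈ S, l s = v) :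
    ∃ B ⊆ X, #X ≤ 2 * #B ∧ ∃ R ⊆ S, ∃ (K : Finset ι) (k : ι → V), #K = #B ∧ (∀ i ∈ K, k i ∈ E i) ∧
      ∑ s ∈ R, {l s} + ∑ i ∈ K, {k i} = (∑ s ∈ R, {h s} + ∑ x ∈ B, {x} : Multiset V) := by
  classical
  rcases X.eq_empty_or_nonempty with rfl | ⟨x₀, hx₀⟩
  · exact ⟨∅, subset_rfl, le_rfl, ∅, empty_subset S, ∅, fun _ => Classical.arbitrary V, rfl,
      by simp, rfl⟩
  obtain ⟨t, htinj, htE, hshift⟩ := exists_injOn_trail_ends (T := {v | ∃ i, v ∈ E i}) S X hinj hX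
    hcov
  have : Nonempty ι := ⟨(htE x₀ hx₀).choose⟩
  choose! f hf using htE
  have hfibre : ∀ i, #{x ∈ X | f x = i} ≤ 2 := fun i => by
    refine (card_le_card_of_injOn t (t := (E i).toFinset) (fun x hx => ?_)
      (htinj.mono (filter_subset _ X))).trans ((E i).toFinset_card_le.trans (hE i))
    rw [coe_filter] at hx
    simpa [← hx.2] using hf x hx.1
  obtain ⟨B, hBX, hfinj, hcard⟩ := exists_injOn_half_le_card X f hfibre
  obtain ⟨R, hRS, hR⟩ := hshift B hBX
  have hinv := hfinj.leftInvOn_invFunOn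
  refine ⟨B, hBX, hcard, R, hRS, B.image f, t ∘ Function.invFunOn f B, card_image_of_injOn hfinj,
    ?_, ?_⟩
  · rw [forall_mem_image]
    intro x hx
    rw [Function.comp_apply, hinv hx]
    exact hf x (hBX hx)
  · rw [sum_image hfinj, ← hR]
    exact congrArg _ (sum_congr rfl fun x hx => by rw [Function.comp_apply, hinv hx])

end Exchange

section Families

variable {V ι : Type*}

/-- The arms `A false` and `A true` of the path `l` at the vertex `a`, listed outwards from `a`.
Both are empty if `l` misses `a`. -/
structure IsArms (a : V) (l : List V) (A : Bool → List V) : Prop where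
  eq_joinArms : a ∈ l → l = joinArms a (A false) (A true)
  eq_nil : a ∉ l → ∀ b, A b = []

/-- A family of nonempty paths, given as lists of vertices, whose edges are those of `M`, with
multiplicity. One-vertex paths are allowed, so the number of paths can be kept fixed. -/
structure IsPathDecomposition [Fintype ι] (P : ι → List V) (M : Multiset (Sym2 V)) : Prop where
  ne_nil : ∀ i, P i ≠ []
  nodup : ∀ i, (P i).Nodup
  sum_pathEdges : ∑ i, pathEdges (P i) = M

/-- The ends of all the paths of a family, with multiplicity. -/
def ends [Fintype ι] (P : ι → List V) : Multiset V :=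
  ∑ i, pathEnds (P i)

lemma exists_isArms (a : V) (l : List V) : ∃ A, IsArms a l A := by
  by_cases ha : a ∈ l
  · obtain ⟨A, B, rfl⟩ := exists_eq_joinArms ha
    exact ⟨fun b => bif b then B else A, fun _ => rfl, fun h => absurd ha h⟩
  · exact ⟨fun _ => [], fun h => absurd h ha, fun _ _ => rfl⟩

lemma IsArms.mem {a : V} {l : List V} {A : Bool → List V} (hA : IsArms a l A) {b : Bool}
    (hb : A b ≠ []) : a ∈ l := by
  by_contra ha
  exact hb (hA.eq_nil ha b)

lemma IsArms.sum_pathEdges_le {a : V} {l : List V} {A : Bool → List V} (hA : IsArms a l A) :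
    ∑ b, pathEdges (a :: A b) ≤ pathEdges l := by
  by_cases ha : a ∈ l
  · rw [hA.eq_joinArms ha, pathEdges_joinArms, Fintype.sum_bool, add_comm]
  · simp [hA.eq_nil ha]

lemma IsArms.exists_getLastD_eq {a v : V} {l : List V} {A : Bool → List V} (hA : IsArms a l A)
    (ha : a ∈ l) (hv : v ∈ pathEnds l) (hva : v ≠ a) : ∃ b, A b ≠ [] ∧ (A b).getLastD a = v := by
  rw [hA.eq_joinArms ha, pathEnds_joinArms, Multiset.mem_add, Multiset.mem_singleton,
    Multiset.mem_singleton] at hv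
  rcases hv with rfl | rfl
  · exact ⟨false, fun h => hva (by rw [h]; rfl), rfl⟩
  · exact ⟨true, fun h => hva (by rw [h]; rfl), rfl⟩

lemma IsArms.exists_flip {a : V} {l : List V} {A : Bool → List V} (hA : IsArms a l A) (ha : a ∈ l)
    (r : Bool → Prop) [DecidablePred r] :
    ∃ l' : List V, l'.Perm l ∧
      pathEdges l' + ∑ b, (if r b then {s(a, (A b).headD a)} else 0) =
        pathEdges l + ∑ b, (if r b then {s(a, (A b).getLastD a)} else 0) ∧
      pathEnds l' + ∑ b, (if r b then {(A b).getLastD a} else 0) =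
        pathEnds l + ∑ b, (if r b then {(A b).headD a} else 0) := by
  refine ⟨joinArms a (flipIf (r false) (A false)) (flipIf (r true) (A true)), ?_, ?_, ?_⟩
  · rw [hA.eq_joinArms ha]
    exact (joinArms_perm ..).trans
      ((((flipIf_perm ..).append (flipIf_perm ..)).cons a).trans (joinArms_perm ..).symm)
  · rw [hA.eq_joinArms ha, pathEdges_joinArms, pathEdges_joinArms, Fintype.sum_bool,
      Fintype.sum_bool, add_comm (ite _ _ _), add_add_add_comm, pathEdges_cons_flipIf,
      pathEdges_cons_flipIf, add_add_add_comm, add_comm (ite _ _ _)]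
  · rw [hA.eq_joinArms ha, pathEnds_joinArms, pathEnds_joinArms, Fintype.sum_bool,
      Fintype.sum_bool, add_comm (ite _ _ _), add_add_add_comm, getLastD_flipIf,
      getLastD_flipIf, add_add_add_comm, add_comm (ite _ _ _)]

/-- A path through `a` changes by flipping some arms, a path missing `a` by appending `a`. -/
lemma IsArms.exists_reroute {a k : V} {l : List V} {A : Bool → List V} (hA : IsArms a l A)
    {r : Bool → Prop} [DecidablePred r] (hr : ∀ b, r b → A b ≠ []) {q : Prop} [Decidable q]
    (hq : q → a ∉ l ∧ k ∈ pathEnds l) (hnil : l ≠ []) (hnodup : l.Nodup) :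
    ∃ l' : List V, l' ≠ [] ∧ l'.Nodup ∧
      pathEdges l' + ∑ b, (if r b then {s(a, (A b).headD a)} else 0) =
        pathEdges l + (∑ b, (if r b then {s(a, (A b).getLastD a)} else 0) +
          (if q then {s(a, k)} else 0)) ∧
      pathEnds l' + (∑ b, (if r b then {(A b).getLastD a} else 0) + (if q then {k} else 0)) =
        pathEnds l + ∑ b, (if r b then {(A b).headD a} else 0) + (if q then {a} else 0) := by
  by_cases ha : a ∈ l
  · have hq' : ¬q := fun h => (hq h).1 ha
    obtain ⟨l', hperm, hedges, hends⟩ := hA.exists_flip ha r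
    exact ⟨l', by rintro rfl; exact hnil hperm.nil_eq.symm, hperm.nodup_iff.2 hnodup,
      by simpa [hq'] using hedges, by simpa [hq'] using hends⟩
  · have hr' : ∀ b, ¬r b := fun b h => ha (hA.mem (hr b h))
    simp only [hr', if_false, sum_const_zero, add_zero, zero_add]
    split_ifs with h
    · obtain ⟨l', hperm, hedges, hends⟩ := exists_perm_of_mem_pathEnds (hq h).2 a
      refine ⟨a :: l', List.cons_ne_nil a l', List.nodup_cons.2 ⟨fun h' => ha (hperm.mem_iff.1 h'),
        hperm.nodup_iff.2 hnodup⟩, by rw [hedges, add_comm], hends⟩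
    · exact ⟨l, hnil, hnodup, by rw [add_zero], by rw [add_zero]⟩

lemma eq_of_mem_of_nodup_sum {α : Type*} [Fintype ι] {f : ι → Multiset α}
    (hf : (∑ i, f i).Nodup) {i j : ι} {x : α} (hi : x ∈ f i) (hj : x ∈ f j) : i = j := by
  classical
  by_contra hij
  rw [← add_sum_erase univ f (mem_univ i), Multiset.nodup_add] at hf
  exact Multiset.disjoint_left.1 hf.2.2 hi
    (Multiset.mem_of_le (single_le_sum_of_canonicallyOrdered
      (mem_erase.2 ⟨Ne.symm hij, mem_univ j⟩)) hj)

variable [Fintype ι]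

lemma mem_ends {P : ι → List V} {v : V} : v ∈ ends P ↔ ∃ i, v ∈ pathEnds (P i) := by
  simp [ends, Multiset.mem_sum]

/-- `M` is the edge set of a simple graph. -/
structure IsSimple (M : Multiset (Sym2 V)) : Prop where
  nodup : M.Nodup
  not_isDiag : ∀ e ∈ M, ¬e.IsDiag

lemma IsSimple.mono {M N : Multiset (Sym2 V)} (hN : IsSimple N) (h : M ≤ N) : IsSimple M :=
  ⟨Multiset.nodup_of_le h hN.nodup, fun e he => hN.not_isDiag e (Multiset.mem_of_le h he)⟩

lemma IsSimple.notMem_left {M N : Multiset (Sym2 V)} (h : IsSimple (M + N)) {e : Sym2 V}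
    (he : e ∈ N) : e ∉ M :=
  fun heM => Multiset.disjoint_left.1 (Multiset.nodup_add.1 h.nodup).2.2 heM he

lemma IsPathDecomposition.card_ends {P : ι → List V} {M : Multiset (Sym2 V)}
    (hP : IsPathDecomposition P M) : (ends P).card = 2 * Fintype.card ι := by
  simp [ends, card_pathEnds (hP.ne_nil _), mul_comm]

section AddStar

variable {P : ι → List V} {M : Multiset (Sym2 V)} {a : V} {X : Finset V} {arm : ι → Bool → List V}

lemma IsPathDecomposition.mem_of_arm_ne_nil (hP : IsPathDecomposition P M)
    (harm : ∀ i, IsArms a (P i) (arm i)) {p : ι × Bool} (hp : arm p.1 p.2 ≠ []) :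
    s(a, (arm p.1 p.2).headD a) ∈ M := by
  rw [← hP.sum_pathEdges, Multiset.mem_sum]
  exact ⟨p.1, mem_univ _, Multiset.mem_of_le (harm p.1).sum_pathEdges_le
    (Multiset.mem_sum.2 ⟨p.2, mem_univ _, mk_headD_mem_pathEdges a hp⟩)⟩

lemma IsPathDecomposition.injOn_headD (hP : IsPathDecomposition P M) (hM : M.Nodup)
    (harm : ∀ i, IsArms a (P i) (arm i)) :
    Set.InjOn (fun p : ι × Bool => (arm p.1 p.2).headD a) {p | arm p.1 p.2 ≠ []} := by
  intro p hp q hq hpq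
  have hle : ∑ p : ι × Bool, pathEdges (a :: arm p.1 p.2) ≤ M := by
    rw [Fintype.sum_prod_type, ← hP.sum_pathEdges]
    exact sum_le_sum fun i _ => (harm i).sum_pathEdges_le
  refine eq_of_mem_of_nodup_sum (Multiset.nodup_of_le hle hM) (mk_headD_mem_pathEdges a hp) ?_
  rw [show (arm p.1 p.2).headD a = (arm q.1 q.2).headD a from hpq]
  exact mk_headD_mem_pathEdges a hq

lemma exists_mem_pathEnds_or_getLastD_eq (harm : ∀ i, IsArms a (P i) (arm i)) {v : V}
    (hv : v ∈ ends P) (hva : v ≠ a) : (∃ i, a ∉ P i ∧ v ∈ pathEnds (P i)) ∨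
      ∃ p : ι × Bool, arm p.1 p.2 ≠ [] ∧ (arm p.1 p.2).getLastD a = v := by
  obtain ⟨i, hi⟩ := mem_ends.1 hv
  by_cases ha : a ∈ P i
  · obtain ⟨b, hb, hlast⟩ := (harm i).exists_getLastD_eq ha hi hva
    exact .inr ⟨(i, b), hb, hlast⟩
  · exact .inl ⟨i, ha, hi⟩

lemma IsPathDecomposition.exists_arm_exchange (hP : IsPathDecomposition P M)
    (harm : ∀ i, IsArms a (P i) (arm i)) (hM : IsSimple (M + X.val.map (s(a, ·))))
    (hends : ∀ v, s(a, v) ∈ M ∨ v ∈ X → v ∈ ends P) :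
    ∃ B ⊆ X, #X ≤ 2 * #B ∧ ∃ (R : Finset (ι × Bool)) (K : Finset ι) (k : ι → V),
      (∀ p ∈ R, arm p.1 p.2 ≠ []) ∧ #K = #B ∧ (∀ i ∈ K, a ∉ P i ∧ k i ∈ pathEnds (P i)) ∧
      ∑ p ∈ R, {(arm p.1 p.2).getLastD a} + ∑ i ∈ K, {k i} =
        ∑ p ∈ R, {(arm p.1 p.2).headD a} + B.val := by
  classical
  have : Nonempty V := ⟨a⟩
  have mem_star : ∀ x ∈ X, s(a, x) ∈ X.val.map (s(a, ·)) := fun x hx => Multiset.mem_map_of_mem _ hx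
  have haM : ∀ v, s(a, v) ∈ M ∨ v ∈ X → v ≠ a := by
    rintro v hv rfl
    exact hM.not_isDiag s(v, v) (Multiset.mem_add.2 (hv.imp_right (mem_star v))) rfl
  obtain ⟨B, hBX, hcard, R, hRS, K, k, hKB, hk, hsum⟩ :=
    exists_exchange (X := X) (S := {p : ι × Bool | arm p.1 p.2 ≠ []})
      (h := fun p => (arm p.1 p.2).headD a) (l := fun p => (arm p.1 p.2).getLastD a)
      (E := fun i => if a ∈ P i then 0 else pathEnds (P i))
      (fun i => by split_ifs <;> simp [card_pathEnds (hP.ne_nil i)])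
      (by simpa using hP.injOn_headD (hM.mono (Multiset.le_add_right _ _)).nodup harm)
      (fun p hp hpX => hM.notMem_left (mem_star _ hpX)
        (hP.mem_of_arm_ne_nil harm (by simpa using hp)))
      (fun v hv => by
        have hv : s(a, v) ∈ M ∨ v ∈ X := by
          rcases hv with hv | ⟨p, hp, rfl⟩
          · exact .inr hv
          · exact .inl (hP.mem_of_arm_ne_nil harm (by simpa using hp))
        rcases exists_mem_pathEnds_or_getLastD_eq harm (hends v hv) (haM v hv) with
          ⟨i, ha, hi⟩ | ⟨p, hp, hlast⟩
        · exact .inl ⟨i, by simpa [ha] using hi⟩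
        · exact .inr ⟨p, by simpa using hp, hlast⟩)
  refine ⟨B, hBX, hcard, R, K, k, fun p hp => by simpa using hRS hp, hKB, fun i hi => ?_, ?_⟩
  · have := hk i hi
    split_ifs at this with ha
    · simp at this
    · exact ⟨ha, this⟩
  · rw [hsum, sum_multiset_singleton]

lemma sum_sum_ite_mem {κ β : Type*} [Fintype κ] [AddCommMonoid β] [DecidableEq (ι × κ)]
    (R : Finset (ι × κ)) (f : ι × κ → β) :
    ∑ i, ∑ b, (if (i, b) ∈ R then f (i, b) else 0) = ∑ p ∈ R, f p := by
  rw [← Fintype.sum_prod_type', sum_ite_mem, univ_inter]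

/-- Lovász's construction in the form due to Fan. -/
theorem IsPathDecomposition.exists_add_star (hP : IsPathDecomposition P M)
    (hM : IsSimple (M + X.val.map (s(a, ·))))
    (hends : ∀ v, s(a, v) ∈ M ∨ v ∈ X → v ∈ ends P) :
    ∃ B ⊆ X, #X ≤ 2 * #B ∧ ∃ P' : ι → List V,
      IsPathDecomposition P' (M + B.val.map (s(a, ·))) ∧
      ends P' + B.val = ends P + Multiset.replicate #B a := by
  classical
  choose arm harm using fun i => exists_isArms a (P i)
  obtain ⟨B, hBX, hcard, R, K, k, hR, hKB, hk, hsum⟩ :=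
    hP.exists_arm_exchange harm hM hends
  choose P' hnil hnodup hedges hEnds using fun i =>
    (harm i).exists_reroute (r := fun b => (i, b) ∈ R) (q := i ∈ K) (fun b hb => hR _ hb)
      (hk i) (hP.ne_nil i) (hP.nodup i)
  refine ⟨B, hBX, hcard, P', ⟨hnil, hnodup, ?_⟩, ?_⟩
  · have key := Fintype.sum_congr _ _ hedges
    have hmap := congrArg (Multiset.mapAddMonoidHom (s(a, ·))) hsum
    simp only [map_add, map_sum, Multiset.coe_mapAddMonoidHom, Multiset.map_singleton] at hmap
    simp only [sum_add_distrib, sum_sum_ite_mem R fun p => {s(a, (arm p.1 p.2).headD a)},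
      sum_sum_ite_mem R fun p => {s(a, (arm p.1 p.2).getLastD a)}, sum_ite_mem, univ_inter,
      hP.sum_pathEdges, hmap] at key
    rw [add_left_comm, add_comm] at key
    exact add_left_cancel key
  · have key := Fintype.sum_congr _ _ hEnds
    simp only [sum_add_distrib, sum_sum_ite_mem R fun p => {(arm p.1 p.2).headD a},
      sum_sum_ite_mem R fun p => {(arm p.1 p.2).getLastD a}, sum_ite_mem, univ_inter, hsum,
      sum_const, hKB, Multiset.nsmul_singleton] at key
    rw [add_left_comm, add_right_comm, add_comm] at key
    exact add_right_cancel key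

lemma IsPathDecomposition.exists_add_edge {x : V} (hP : IsPathDecomposition P M)
    (hM : IsSimple (M + {s(a, x)})) (hends : ∀ v, s(a, v) ∈ M ∨ v = x → v ∈ ends P) :
    ∃ P' : ι → List V, IsPathDecomposition P' (M + {s(a, x)}) ∧ ends P' + {x} = ends P + {a} := by
  obtain ⟨B, hBX, hcard, P', hP', hends'⟩ :=
    hP.exists_add_star (X := {x}) hM (by simpa only [mem_singleton])
  obtain rfl : B = {x} := (subset_singleton_iff.1 hBX).resolve_left (by rintro rfl; simp at hcard)
  exact ⟨P', hP', hends'⟩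

/-- The edges `zy` are added one at a time, each by rerouting paths at `y` rather than at `z`. -/
lemma IsPathDecomposition.exists_add_star_at_leaves [DecidableEq V] {z : V} {Y : Finset V}
    (hP : IsPathDecomposition P M) (hM : IsSimple (M + Y.val.map (s(z, ·))))
    (hz : #Y ≤ (ends P).count z) (hends : ∀ y ∈ Y, ∀ v, s(y, v) ∈ M → v ∈ ends P) :
    ∃ P' : ι → List V, IsPathDecomposition P' (M + Y.val.map (s(z, ·))) ∧
      ends P' + Multiset.replicate #Y z = ends P + Y.val := by
  induction Y using Finset.induction with
  | empty => exact ⟨P, by simpa using hP, by simp⟩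
  | insert y Y hy ih =>
    have hsplit : M + (insert y Y).val.map (s(z, ·)) = M + Y.val.map (s(z, ·)) + {s(y, z)} := by
      rw [insert_val_of_notMem hy, Multiset.map_cons, Multiset.add_cons, add_comm _ {s(y, z)},
        Multiset.singleton_add, Sym2.eq_swap]
    rw [card_insert_of_notMem hy] at hz
    rw [hsplit] at hM ⊢
    obtain ⟨P', hP', hends'⟩ := ih (hM.mono (Multiset.le_add_right _ _)) (by lia)
      fun y' hy' => hends y' (mem_insert_of_mem hy')
    have hyz : y ≠ z := by
      rintro rfl
      exact hM.not_isDiag s(y, y) (by simp) rfl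
    have hends_y : ∀ v, s(y, v) ∈ M + Y.val.map (s(z, ·)) ∨ v = z → v ∈ ends P' := by
      have hz' : z ∈ ends P' := by
        have := congrArg (Multiset.count z) hends'
        rw [Multiset.count_add, Multiset.count_add, Multiset.count_replicate_self] at this
        exact Multiset.count_pos.1 (by lia)
      rintro v (hv | rfl)
      · rcases Multiset.mem_add.1 hv with hv | hv
        · have hmem : v ∈ ends P' + Multiset.replicate #Y z :=
            hends' ▸ Multiset.mem_add.2 (.inl (hends y (mem_insert_self y Y) v hv))
          rcases Multiset.mem_add.1 hmem with hv' | hv'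
          · exact hv'
          · exact Multiset.eq_of_mem_replicate hv' ▸ hz'
        · obtain ⟨y', -, hy'⟩ := Multiset.mem_map.1 hv
          rcases Sym2.eq_iff.1 hy' with ⟨h, -⟩ | ⟨rfl, -⟩
          · exact absurd h.symm hyz
          · exact hz'
      · exact hz'
    obtain ⟨P'', hP'', hends''⟩ := hP'.exists_add_edge hM hends_y
    refine ⟨P'', hP'', ?_⟩
    rw [card_insert_of_notMem hy, insert_val_of_notMem hy, Multiset.replicate_succ,
      ← Multiset.singleton_add, ← add_assoc, hends'', add_right_comm, hends',
      add_assoc, add_comm Y.val, Multiset.singleton_add]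

end AddStar

section Append

lemma IsPathDecomposition.append {m n : ℕ} {P : Fin m → List V} {Q : Fin n → List V}
    {M N : Multiset (Sym2 V)} (hP : IsPathDecomposition P M) (hQ : IsPathDecomposition Q N) :
    IsPathDecomposition (Fin.append P Q) (M + N) where
  ne_nil := Fin.addCases (by simpa using hP.ne_nil) (by simpa using hQ.ne_nil)
  nodup := Fin.addCases (by simpa using hP.nodup) (by simpa using hQ.nodup)
  sum_pathEdges := by simp [Fin.sum_univ_add, hP.sum_pathEdges, hQ.sum_pathEdges]

lemma ends_append {m n : ℕ} (P : Fin m → List V) (Q : Fin n → List V) :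
    ends (Fin.append P Q) = ends P + ends Q := by
  simp [ends, Fin.sum_univ_add]

lemma isPathDecomposition_singleton {l : List V} (hne : l ≠ []) (hl : l.Nodup) :
    IsPathDecomposition (fun _ : Fin 1 => l) (pathEdges l) :=
  ⟨fun _ => hne, fun _ => hl, Fintype.sum_unique _⟩

/-- Pair up the leaves of the star. -/
lemma exists_isPathDecomposition_star {a : V} (Y : Finset V) (ha : a ∉ Y) :
    ∃ (k : ℕ) (P : Fin k → List V), IsPathDecomposition P (Y.val.map (s(a, ·))) ∧
      2 * k = #Y + #Y % 2 := by
  classical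
  induction Y using Finset.strongInduction with
  | H Y ih =>
  rcases Y.eq_empty_or_nonempty with rfl | ⟨y, hy⟩
  · exact ⟨0, Fin.elim0, ⟨Fin.rec0, Fin.rec0, rfl⟩, rfl⟩
  have hay : a ≠ y := ne_of_mem_of_not_mem hy ha |>.symm
  obtain ⟨Y, hyY, rfl⟩ : ∃ Y' : Finset V, y ∉ Y' ∧ insert y Y' = Y :=
    ⟨Y.erase y, notMem_erase y Y, insert_erase hy⟩
  rcases Y.eq_empty_or_nonempty with rfl | ⟨y', hy'⟩
  · exact ⟨1, _, isPathDecomposition_singleton (l := [a, y]) (by simp) (by simpa), rfl⟩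
  have hay' : a ≠ y' := by grind
  obtain ⟨Y, hyY', rfl⟩ : ∃ Y' : Finset V, y' ∉ Y' ∧ insert y' Y' = Y :=
    ⟨Y.erase y', notMem_erase y' Y, insert_erase hy'⟩
  obtain ⟨k, P, hP, hk⟩ := ih Y (by grind) (by grind)
  have hedges : pathEdges [y, a, y'] + Y.val.map (s(a, ·)) =
      (insert y (insert y' Y)).val.map (s(a, ·)) := by
    rw [insert_val_of_notMem hyY, insert_val_of_notMem hyY', Multiset.map_cons, Multiset.map_cons,
      pathEdges_cons_cons, pathEdges_cons_cons, pathEdges_singleton, Sym2.eq_swap,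
      Multiset.cons_add, Multiset.cons_add, zero_add]
  have hpath : [y, a, y'].Nodup := by grind
  refine ⟨1 + k, _, hedges ▸ (isPathDecomposition_singleton (by simp) hpath).append hP, ?_⟩
  rw [card_insert_of_notMem hyY, card_insert_of_notMem hyY']
  lia

end Append

end Families

section Graph

variable {V : Type*}

lemma isSimple_edgeFinset (G : SimpleGraph V) [Fintype G.edgeSet] : IsSimple G.edgeFinset.val :=
  ⟨G.edgeFinset.nodup, fun _ he => G.not_isDiag_of_mem_edgeFinset he⟩

/-- The graph `G` without the edges from `a` to `X`. -/
def deleteStar (G : SimpleGraph V) (a : V) (X : Finset V) : SimpleGraph V :=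
  G.deleteEdges ((s(a, ·)) '' X)

variable {G : SimpleGraph V} {a : V} {X : Finset V}

lemma deleteStar_adj {v w : V} : (deleteStar G a X).Adj v w ↔
    G.Adj v w ∧ ¬(v = a ∧ w ∈ X) ∧ ¬(w = a ∧ v ∈ X) := by
  simp only [deleteStar, SimpleGraph.deleteEdges_adj, Set.mem_image, mem_coe, Sym2.eq_iff]
  grind

lemma deleteStar_lt (hX : ∀ x ∈ X, G.Adj a x) (hne : X.Nonempty) : deleteStar G a X < G := by
  obtain ⟨x, hx⟩ := hne
  refine lt_of_le_of_ne (G.deleteEdges_le _) fun h => ?_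
  have hadj := hX x hx
  rw [← h, deleteStar_adj] at hadj
  exact hadj.2.1 ⟨rfl, hx⟩

lemma edgeFinset_deleteStar_add [Fintype G.edgeSet] [Fintype (deleteStar G a X).edgeSet]
    (hX : ∀ x ∈ X, G.Adj a x) :
    (deleteStar G a X).edgeFinset.val + X.val.map (s(a, ·)) = G.edgeFinset.val := by
  classical
  have hstar : X.val.map (s(a, ·)) = (X.image (s(a, ·))).val :=
    (image_val_of_injOn fun x _ y _ h => Sym2.congr_right.1 h).symm
  have hdel : (deleteStar G a X).edgeFinset = G.edgeFinset \ X.image (s(a, ·)) := by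
    ext e
    rw [mem_sdiff, SimpleGraph.mem_edgeFinset, SimpleGraph.mem_edgeFinset, deleteStar,
      SimpleGraph.edgeSet_deleteEdges, Set.mem_sdiff, ← coe_image, mem_coe]
  have hsub : X.image (s(a, ·)) ⊆ G.edgeFinset := by
    intro e he
    obtain ⟨x, hx, rfl⟩ := mem_image.1 he
    exact SimpleGraph.mem_edgeFinset.2 (hX x hx)
  rw [hstar, hdel, sdiff_val, tsub_add_cancel_of_le (val_le_iff.2 hsub)]

lemma degree_deleteStar_add [DecidableEq V] {v : V} [Fintype (G.neighborSet v)]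
    [Fintype ((deleteStar G a X).neighborSet v)] (hX : ∀ x ∈ X, G.Adj a x) :
    (deleteStar G a X).degree v + (if v = a then #X else if v ∈ X then 1 else 0) =
      G.degree v := by
  have hdel : (deleteStar G a X).neighborFinset v =
      G.neighborFinset v \ (if v = a then X else if v ∈ X then {a} else ∅) := by
    ext w
    simp only [SimpleGraph.mem_neighborFinset, deleteStar_adj, mem_sdiff]
    have := hX v
    split_ifs <;> grind
  have hsub : (if v = a then X else if v ∈ X then {a} else ∅) ⊆ G.neighborFinset v := by
    intro w hw
    rw [SimpleGraph.mem_neighborFinset]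
    split_ifs at hw with hva hvX
    · exact hva ▸ hX w hw
    · exact mem_singleton.1 hw ▸ (hX v hvX).symm
    · exact absurd hw (notMem_empty w)
  rw [SimpleGraph.degree, hdel, SimpleGraph.degree, ← card_sdiff_add_card_eq_card hsub]
  split_ifs <;> rfl

end Graph

section Lovasz

variable {V : Type*}

lemma exists_isPathDecomposition_zero [Finite V] [DecidableEq V] (d : V → ℕ) :
    ∃ (k : ℕ) (P : Fin k → List V),
      IsPathDecomposition P 0 ∧ ∀ v, (ends P).count v = 2 * d v := by
  have := Fintype.ofFinite V
  let e := Fintype.equivFin (Σ v, Fin (d v))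
  refine ⟨_, fun i => [(e.symm i).1], ⟨fun i => List.cons_ne_nil _ _, fun i =>
    List.nodup_singleton _, by simp⟩, fun v => ?_⟩
  calc (ends fun i => [(e.symm i).1]).count v
    _ = (∑ p : Σ v, Fin (d v), ({p.1} + {p.1} : Multiset V)).count v := by
      rw [← e.symm.sum_comp]
      simp only [ends, pathEnds_cons, List.getLastD_nil]
    _ = 2 * d v := by
      simp [Fintype.sum_sigma, Multiset.count_sum', Multiset.count_add, Multiset.count_singleton,
        sum_add_distrib, two_mul, -Multiset.singleton_add]

variable [Fintype V] {G : SimpleGraph V} [DecidableRel G.Adj] {d : V → ℕ}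

lemma exists_adj_of_edgeFinset_ne_empty (hG : G.edgeFinset ≠ ∅)
    (hzero : ∀ v w, d v = 0 → 0 < G.degree v → d w = 0 → 0 < G.degree w → v = w) :
    ∃ x y, G.Adj x y ∧ d y ≠ 0 ∧ ∀ v, d v = 0 → 0 < G.degree v → v = x := by
  by_cases hz : ∃ z, d z = 0 ∧ 0 < G.degree z
  · obtain ⟨z, hdz, hz⟩ := hz
    obtain ⟨y, hzy⟩ := (G.degree_pos_iff_exists_adj z).1 hz
    exact ⟨z, y, hzy,
      fun hy => hzy.ne (hzero z y hdz hz hy ((G.degree_pos_iff_exists_adj y).2 ⟨z, hzy.symm⟩)),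
      fun v hdv hv => hzero v z hdv hv hdz hz⟩
  · push Not at hz
    obtain ⟨⟨x, y⟩, hxy⟩ := nonempty_iff_ne_empty.2 hG
    rw [SimpleGraph.mem_edgeFinset] at hxy
    have hy : 0 < G.degree y := (G.degree_pos_iff_exists_adj y).2 ⟨x, hxy.symm⟩
    exact ⟨x, y, hxy, fun h => (hz y h).not_gt hy, fun v hdv hv => absurd hv (hz v hdv).not_gt⟩

/-- Lovász's theorem, with prescribed ends. -/
theorem exists_isPathDecomposition_of_parity [DecidableEq V]
    (hpar : ∀ v, d v % 2 = G.degree v % 2)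
    (hzero : ∀ v w, d v = 0 → 0 < G.degree v → d w = 0 → 0 < G.degree w → v = w) :
    ∃ (k : ℕ) (P : Fin k → List V),
      IsPathDecomposition P G.edgeFinset.val ∧ ∀ v, (ends P).count v = d v := by
  rename DecidableRel G.Adj => dec
  induction G using WellFoundedLT.induction generalizing d dec with
  | ind G ih =>
  by_cases hG : G.edgeFinset = ∅
  · have hdeg (v) : G.degree v = 0 := by
      simp [SimpleGraph.degree, SimpleGraph.edgeFinset_eq_empty.1 hG]
    obtain ⟨k, P, hP, hends⟩ := exists_isPathDecomposition_zero fun v => d v / 2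
    refine ⟨k, P, by rwa [hG], fun v => ?_⟩
    rw [hends]
    grind
  obtain ⟨x, y, hxy, hy, huniq⟩ := exists_adj_of_edgeFinset_ne_empty hG hzero
  classical
  have hadj : ∀ v ∈ ({x} : Finset V), G.Adj y v := by simpa using hxy.symm
  have hne := hxy.ne
  have hdeg (v) := degree_deleteStar_add (v := v) hadj
  simp only [card_singleton, mem_singleton] at hdeg
  obtain ⟨k, P, hP, hends⟩ := ih (deleteStar G y {x})
    (deleteStar_lt hadj (singleton_nonempty x))
    (d := fun v => if v = x then d v + 1 else if v = y then d v - 1 else d v)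
    (by grind) (by grind)
  have hM := edgeFinset_deleteStar_add hadj
  rw [singleton_val, Multiset.map_singleton] at hM
  have mem_ends (v) (hv : s(y, v) ∈ (deleteStar G y {x}).edgeFinset.val ∨ v = x) : v ∈ ends P := by
    have hyv : G.Adj y v := by
      rw [← SimpleGraph.mem_edgeSet, ← SimpleGraph.mem_edgeFinset, ← mem_val, ← hM]
      exact Multiset.mem_add.2 (hv.imp_right (by rintro rfl; exact Multiset.mem_singleton_self _))
    have hpos := (G.degree_pos_iff_exists_adj v).2 ⟨y, hyv.symm⟩
    have hvy := hyv.ne'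
    rw [← Multiset.count_pos, hends]
    grind
  obtain ⟨P', hP', hends'⟩ := hP.exists_add_edge (hM ▸ isSimple_edgeFinset G) mem_ends
  refine ⟨k, P', hM ▸ hP', fun v => ?_⟩
  have hcount := congr_arg (Multiset.count v) hends'
  simp only [Multiset.count_add, Multiset.count_singleton, hends] at hcount
  grind

end Lovasz

lemma exists_nonempty_subset_card_le {α : Type*} [DecidableEq α] {S : Finset α}
    (hS : S.Nonempty) :
    ∃ X ⊆ S, X.Nonempty ∧ 4 * ((#X / 2 + 1) / 2) + #(S \ X) ≤ #X + #X % 2 := by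
  by_cases hmod : #S % 4 = 2
  · obtain ⟨x, hx⟩ := hS
    have hcard := card_erase_of_mem hx
    have hsdiff := card_sdiff_add_card_eq_card (erase_subset x S)
    exact ⟨S.erase x, erase_subset x S, card_pos.1 (by lia), by lia⟩
  · exact ⟨S, Subset.rfl, hS, by rw [Finset.sdiff_self, card_empty]; lia⟩

section Economical

variable {V : Type*} [Fintype V] [DecidableEq V] {G : SimpleGraph V} [DecidableRel G.Adj]
  {R : Finset V} {a : V} {X : Finset V}

/-- A vertex which has to be an end of some path: it has odd degree, or is prescribed by `R`. -/
abbrev IsGood (G : SimpleGraph V) [DecidableRel G.Adj] (R : Finset V) (v : V) : Prop :=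
  Odd (G.degree v) ∨ v ∈ R

/-- The neighbors of `a` which are not required to be ends of paths. -/
def badNeighbors (G : SimpleGraph V) [DecidableRel G.Adj] (R : Finset V) (a : V) : Finset V :=
  {v | G.Adj a v ∧ ¬IsGood G R v}

/-- Four times the contribution of the vertex `v` to the number of paths. -/
def weight (G : SimpleGraph V) [DecidableRel G.Adj] (R : Finset V) (v : V) : ℕ :=
  if Odd (G.degree v) then 2 else if v ∈ R then 4 else if G.degree v = 0 then 0 else 3

/-- `G` has a path decomposition whose size is bounded by the total weight, such that all the good
vertices are ends. -/
def HasEconomicalDecomposition (G : SimpleGraph V) [DecidableRel G.Adj] (R : Finset V) : Prop :=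
  ∃ (k : ℕ) (P : Fin k → List V), IsPathDecomposition P G.edgeFinset.val ∧
    4 * k ≤ ∑ v, weight G R v ∧ ∀ v, IsGood G R v → v ∈ ends P

lemma mem_badNeighbors {v : V} : v ∈ badNeighbors G R a ↔ G.Adj a v ∧ ¬IsGood G R v := by
  simp [badNeighbors]

lemma badNeighbors_adj (hX : X ⊆ badNeighbors G R a) : ∀ x ∈ X, G.Adj a x :=
  fun _ hx => (mem_badNeighbors.1 (hX hx)).1

lemma hasEconomicalDecomposition_of_isGood (h : ∀ v, 0 < G.degree v → IsGood G R v) :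
    HasEconomicalDecomposition G R := by
  obtain ⟨k, P, hP, hends⟩ := exists_isPathDecomposition_of_parity (G := G)
    (d := fun v => if Odd (G.degree v) then 1 else if v ∈ R then 2 else 0)
    (by grind) (by grind)
  refine ⟨k, P, hP, ?_, fun v hv => ?_⟩
  · have hcard := hP.card_ends
    rw [Fintype.card_fin, ← Multiset.sum_count_eq_card (s := univ) (fun v _ => mem_univ v)] at hcard
    calc 4 * k = ∑ v, 2 * (ends P).count v := by rw [← mul_sum, hcard]; ring
      _ ≤ ∑ v, weight G R v := sum_le_sum fun v _ => by rw [hends, weight]; grind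
  · rw [← Multiset.count_pos, hends]
    grind

section DeleteStar

variable [DecidableRel (deleteStar G a X).Adj]

lemma isGood_deleteStar {R' : Finset V} {v : V} (hX : X ⊆ badNeighbors G R a) (hva : v ≠ a)
    (hv : v ∈ X ∨ IsGood G R v) (hR : v ∈ R → v ∈ R') : IsGood (deleteStar G a X) R' v := by
  have hdeg := degree_deleteStar_add (v := v) (badNeighbors_adj hX)
  have hbad (hvX : v ∈ X) := (mem_badNeighbors.1 (hX hvX)).2
  grind

lemma exists_isPathDecomposition_partial_star {ι : Type*} [Fintype ι] {P : ι → List V}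
    (hX : ∀ x ∈ X, G.Adj a x)
    (hP : IsPathDecomposition P (deleteStar G a X).edgeFinset.val)
    (hends : ∀ v, G.Adj a v → v ∈ ends P) :
    ∃ B ⊆ X, #X ≤ 2 * #B ∧ ∃ (M : Multiset (Sym2 V)) (P' : ι → List V),
      M + (X \ B).val.map (s(a, ·)) = G.edgeFinset.val ∧ IsPathDecomposition P' M ∧
      ends P' + B.val = ends P + Multiset.replicate #B a := by
  have hM := edgeFinset_deleteStar_add hX
  obtain ⟨B, hBX, hB, P', hP', hends'⟩ := hP.exists_add_star
    (hM ▸ isSimple_edgeFinset G) fun v hv => hends v <| hv.elim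
      (fun h => (deleteStar_adj.1 (SimpleGraph.mem_edgeFinset.1 h)).1) (hX v)
  refine ⟨B, hBX, hB, _, P', ?_, hP', hends'⟩
  rw [add_assoc, ← Multiset.map_add, sdiff_val, add_tsub_cancel_of_le (val_le_iff.2 hBX), hM]

lemma sum_weight_deleteStar_bad (hX : X ⊆ badNeighbors G R a) (ha : ¬IsGood G R a) :
    ∑ v, weight (deleteStar G a X) (R ∪ (badNeighbors G R a \ X)) v + #X + #X % 2 ≤
      ∑ v, weight G R v + #(badNeighbors G R a \ X) := by
  have key (v : V) : weight (deleteStar G a X) (R ∪ (badNeighbors G R a \ X)) v +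
      (if v ∈ X then 1 else 0) + (if v = a then #X % 2 else 0) ≤
      weight G R v + if v ∈ badNeighbors G R a \ X then 1 else 0 := by
    have hdeg := degree_deleteStar_add (v := v) (badNeighbors_adj hX)
    have hbad (hv : v ∈ badNeighbors G R a) : 0 < G.degree v ∧ v ≠ a ∧ ¬IsGood G R v := by
      obtain ⟨hav, hv⟩ := mem_badNeighbors.1 hv
      exact ⟨(G.degree_pos_iff_exists_adj v).2 ⟨a, hav.symm⟩, hav.ne', hv⟩
    have hXv (hv : v ∈ X) := hX hv
    simp only [weight, mem_union, mem_sdiff]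
    grind
  simpa [sum_add_distrib, -mem_sdiff] using sum_le_sum fun v (_ : v ∈ univ) => key v

lemma sum_weight_deleteStar_good {R' : Finset V} (hX : X ⊆ badNeighbors G R a)
    (ha : IsGood G R a) (hR : R' = if Odd #X then R.erase a else R) :
    ∑ v, weight (deleteStar G a X) R' v + #X ≤ ∑ v, weight G R v + #X % 2 := by
  have key (v : V) : weight (deleteStar G a X) R' v + (if v ∈ X then 1 else 0) ≤
      weight G R v + if v = a then #X % 2 else 0 := by
    have hdeg := degree_deleteStar_add (v := v) (badNeighbors_adj hX)
    have hXv (hv : v ∈ X) := mem_badNeighbors.1 (hX hv)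
    simp only [weight]
    grind
  simpa [sum_add_distrib] using sum_le_sum fun v (_ : v ∈ univ) => key v

lemma HasEconomicalDecomposition.of_deleteStar_bad (ha : ¬IsGood G R a)
    (hX : X ⊆ badNeighbors G R a)
    (hcard : 4 * ((#X / 2 + 1) / 2) + #(badNeighbors G R a \ X) ≤ #X + #X % 2)
    (h : HasEconomicalDecomposition (deleteStar G a X) (R ∪ (badNeighbors G R a \ X))) :
    HasEconomicalDecomposition G R := by
  obtain ⟨k, P, hP, hk, hends⟩ := h
  have haX (v) (hv : v ∈ X) : v ≠ a := (badNeighbors_adj hX v hv).ne'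
  have isGood_of_adj (v) (hv : G.Adj a v) :
      IsGood (deleteStar G a X) (R ∪ (badNeighbors G R a \ X)) v := by
    have hbad := mem_badNeighbors (G := G) (R := R) (a := a) (v := v)
    by_cases hvC : v ∈ badNeighbors G R a \ X
    · exact .inr (mem_union_right R hvC)
    · exact isGood_deleteStar hX hv.ne' (by grind) (mem_union_left _)
  obtain ⟨B, hBX, hB, M, P', hM, hP', hends'⟩ :=
    exists_isPathDecomposition_partial_star (badNeighbors_adj hX) hP
      fun v hv => hends v (isGood_of_adj v hv)
  obtain ⟨k', Q, hQ, hk'⟩ := exists_isPathDecomposition_star (a := a) (X \ B) (by grind)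
  refine ⟨k + k', _, hM ▸ hP'.append hQ, ?_, fun v hv => ?_⟩
  · have hw := sum_weight_deleteStar_bad hX ha
    have := card_sdiff_add_card_eq_card hBX
    lia
  · have hva : v ≠ a := by rintro rfl; exact ha hv
    have hvB : v ∉ B.val := fun hvB => (mem_badNeighbors.1 (hX (hBX hvB))).2 hv
    have hmem : v ∈ ends P' + B.val := hends' ▸ Multiset.mem_add.2
      (.inl (hends v (isGood_deleteStar hX hva (.inr hv) (mem_union_left _))))
    rw [ends_append]
    exact Multiset.mem_add.2 (.inl ((Multiset.mem_add.1 hmem).resolve_right hvB))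

lemma HasEconomicalDecomposition.of_deleteStar_good {R' : Finset V} (ha : IsGood G R a)
    (hX : X = badNeighbors G R a) (hne : X.Nonempty)
    (hind : ∀ v w, G.Adj v w → ¬IsGood G R v → IsGood G R w)
    (hR : R' = if Odd #X then R.erase a else R)
    (h : HasEconomicalDecomposition (deleteStar G a X) R') :
    HasEconomicalDecomposition G R := by
  obtain ⟨k, P, hP, hk, hends⟩ := h
  have mem_ends {v} (hv : v ∈ X ∨ IsGood G R v) (hva : v ≠ a) : v ∈ ends P :=
    hends v (isGood_deleteStar hX.le hva hv (by grind))
  obtain ⟨B, hBX, hB, M, P', hM, hP', hends'⟩ :=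
    exists_isPathDecomposition_partial_star (badNeighbors_adj hX.le) hP fun v hv =>
      mem_ends (by have := mem_badNeighbors (G := G) (R := R) (a := a) (v := v); grind) hv.ne'
  have hcard := card_sdiff_add_card_eq_card hBX
  have hXpos := hne.card_pos
  have hcount (v) : (ends P').count v + (if v ∈ B then 1 else 0) =
      (ends P).count v + (if v = a then #B else 0) := by
    simpa [Multiset.count_eq_of_nodup B.nodup, Multiset.count_replicate, eq_comm (a := a)] using
      congr_arg (Multiset.count v) hends'
  have not_isGood {v} (hv : v ∈ X) : ¬IsGood G R v := (mem_badNeighbors.1 (hX.le hv)).2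
  have haX : a ∉ X := fun h => not_isGood h ha
  have hlt : #(X \ B) < (ends P').count a := by
    have hdeg := degree_deleteStar_add (v := a) (badNeighbors_adj hX.le)
    have heven (h : Even #X) : 0 < (ends P).count a :=
      Multiset.count_pos.2 (hends a (by grind))
    grind
  have mem_ends' {v} (hv : IsGood G R v) : v ∈ ends P' := by
    rw [← Multiset.count_pos]
    have hmem (hva : v ≠ a) := Multiset.count_pos.2 (mem_ends (.inr hv) hva)
    grind
  obtain ⟨P'', hP'', hends''⟩ := hP'.exists_add_star_at_leaves
    (hM ▸ isSimple_edgeFinset G) hlt.le fun y hy v hv =>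
      have hyv : s(y, v) ∈ G.edgeFinset.val := hM ▸ Multiset.mem_add.2 (.inl hv)
      mem_ends' (hind y v (SimpleGraph.mem_edgeFinset.1 hyv) (not_isGood (mem_sdiff.1 hy).1))
  refine ⟨k, P'', hM ▸ hP'', ?_, fun v hv => ?_⟩
  · have hw := sum_weight_deleteStar_good hX.le ha hR
    lia
  · have hcount'' := congr_arg (Multiset.count v) hends''
    rw [Multiset.count_add, Multiset.count_add, Multiset.count_replicate] at hcount''
    have := Multiset.count_pos.2 (mem_ends' hv)
    rw [← Multiset.count_pos]
    grind

end DeleteStar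

theorem hasEconomicalDecomposition (G : SimpleGraph V) [DecidableRel G.Adj] (R : Finset V) :
    HasEconomicalDecomposition G R := by
  classical
  rename DecidableRel G.Adj => dec
  induction G using WellFoundedLT.induction generalizing R dec with
  | ind G ih =>
  by_cases hbad : ∃ a b, G.Adj a b ∧ ¬IsGood G R a ∧ ¬IsGood G R b
  · obtain ⟨a, b, hab, ha, hb⟩ := hbad
    obtain ⟨X, hX, hne, hcard⟩ :=
      exists_nonempty_subset_card_le ⟨b, mem_badNeighbors.2 ⟨hab, hb⟩⟩
    exact .of_deleteStar_bad ha hX hcard (ih _ (deleteStar_lt (badNeighbors_adj hX) hne) _)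
  have hind (v w) (hvw : G.Adj v w) (hv : ¬IsGood G R v) : IsGood G R w :=
    by_contra fun hw => hbad ⟨v, w, hvw, hv, hw⟩
  by_cases hdeg : ∀ v, 0 < G.degree v → IsGood G R v
  · exact hasEconomicalDecomposition_of_isGood hdeg
  obtain ⟨b, hpos, hb⟩ : ∃ b, 0 < G.degree b ∧ ¬IsGood G R b := by simpa using hdeg
  obtain ⟨z, hbz⟩ := (G.degree_pos_iff_exists_adj b).1 hpos
  have hne : (badNeighbors G R z).Nonempty := ⟨b, mem_badNeighbors.2 ⟨hbz.symm, hb⟩⟩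
  exact .of_deleteStar_good (hind b z hbz (hb)) rfl hne hind rfl
    (ih _ (deleteStar_lt (badNeighbors_adj Subset.rfl) hne) _)

end Economical

section Weight

variable {V : Type*} [Fintype V]

lemma sum_weight_empty [DecidableEq V] (G : SimpleGraph V) [DecidableRel G.Adj] :
    ∑ v, weight G ∅ v =
      2 * #{v | Odd (G.degree v)} + 3 * #{v | Even (G.degree v) ∧ 0 < G.degree v} := by
  have key (v : V) : weight G ∅ v = (if Odd (G.degree v) then 2 else 0) +
      if Even (G.degree v) ∧ 0 < G.degree v then 3 else 0 := by
    grind [weight]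
  simp only [key, sum_add_distrib, ← sum_filter, sum_const, smul_eq_mul, mul_comm]

lemma card_odd_add_card_even_le (G : SimpleGraph V) [DecidableRel G.Adj] :
    #{v | Odd (G.degree v)} + #{v | Even (G.degree v) ∧ 0 < G.degree v} ≤ Fintype.card V := by
  classical
  rw [← card_union_of_disjoint]
  · exact card_le_univ _
  · exact disjoint_filter.2 fun v _ hodd heven => Nat.not_even_iff_odd.2 hodd heven.1

end Weight

section Walks

variable {V : Type*} {G : SimpleGraph V}

lemma isChain_of_pathEdges_subset {l : List V} (h : ∀ e ∈ pathEdges l, e ∈ G.edgeSet) :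
    l.IsChain G.Adj := by
  induction l with
  | nil => exact .nil
  | cons x l ih =>
    cases l with
    | nil => exact .singleton x
    | cons y l =>
      simp only [pathEdges_cons_cons, Multiset.mem_cons, forall_eq_or_imp] at h
      exact .cons_cons h.1 (ih h.2)

lemma IsPathDecomposition.exists_walks {ι : Type*} [Fintype ι] {P : ι → List V} [Fintype G.edgeSet]
    (hP : IsPathDecomposition P G.edgeFinset.val) :
    ∃ p : ι → Σ (a : V) (b : V), G.Walk a b, (∀ i, (p i).2.2.IsPath) ∧
      (∀ i j, i ≠ j → ∀ e ∈ (p i).2.2.edges, e ∉ (p j).2.2.edges) ∧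
      ∀ e, e ∈ G.edgeSet ↔ ∃ i, e ∈ (p i).2.2.edges := by
  have mem_edgeSet_iff (e) : e ∈ G.edgeSet ↔ ∃ i, e ∈ pathEdges (P i) := by
    rw [← SimpleGraph.mem_edgeFinset, ← mem_val, ← hP.sum_pathEdges, Multiset.mem_sum]
    simp
  have hchain (i) : (P i).IsChain G.Adj :=
    isChain_of_pathEdges_subset fun e he => (mem_edgeSet_iff e).2 ⟨i, he⟩
  let p (i) : Σ (a : V) (b : V), G.Walk a b := ⟨_, _, .ofSupport (P i) (hP.ne_nil i) (hchain i)⟩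
  have mem_edges (i e) : e ∈ (p i).2.2.edges ↔ e ∈ pathEdges (P i) := by
    rw [SimpleGraph.Walk.edges_eq_zipWith_support, SimpleGraph.Walk.support_ofSupport]
    rfl
  refine ⟨p, fun i => .mk' ?_, fun i j hij e hi hj => hij ?_, by simpa only [mem_edges]⟩
  · rw [SimpleGraph.Walk.support_ofSupport]
    exact hP.nodup i
  · exact eq_of_mem_of_nodup_sum (hP.sum_pathEdges ▸ G.edgeFinset.nodup) ((mem_edges i e).1 hi)
      ((mem_edges j e).1 hj)

end Walks

end PathDecomposition

open Finset PathDecomposition in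
theorem stmt_10_general {V : Type*} [Fintype V] (G : SimpleGraph V) [DecidableRel G.Adj] :
    ∃ L : List (Σ (a : V) (b : V), G.Walk a b),
      L.length ≤ #{v | Odd (G.degree v)} / 2 + 3 * #{v | Even (G.degree v) ∧ 0 < G.degree v} / 4 ∧
      L.length ≤ 3 * Fintype.card V / 4 ∧
      (∀ p ∈ L, p.2.2.IsPath) ∧
      L.Pairwise (fun p q => ∀ e ∈ p.2.2.edges, e ∉ q.2.2.edges) ∧
      ∀ e : Sym2 V, e ∈ G.edgeSet ↔ ∃ p ∈ L, e ∈ p.2.2.edges := by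
  classical
  obtain ⟨k, P, hP, hk, -⟩ := hasEconomicalDecomposition G ∅
  obtain ⟨p, hpath, hdisj, hcover⟩ := hP.exists_walks
  rw [sum_weight_empty] at hk
  obtain ⟨m, hm⟩ := G.even_card_odd_degree_vertices
  have hcard := card_odd_add_card_even_le G
  refine ⟨List.ofFn p, ?_, ?_, ?_, ?_, ?_⟩
  · rw [List.length_ofFn]
    omega
  · rw [List.length_ofFn]
    omega
  · exact List.forall_mem_ofFn_iff.2 hpath
  · exact List.pairwise_ofFn.2 fun i j hij => hdisj i j hij.ne
  · simpa [List.mem_ofFn] using hcover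

/-- Donald: if a simple graph G has u vertices of odd degree and
g nonisolated vertices of even degree, then E(G) can be partitioned into at
most u/2 + ⌊(3/4)g⌋ paths; in particular at most ⌊(3/4)n⌋ paths suffice. -/
theorem stmt_10 (n : ℕ) (G : SimpleGraph (Fin n)) [DecidableRel G.Adj]
    (u g : ℕ)
    (hu : u = (Finset.univ.filter fun v => Odd (G.degree v)).card)
    (hg : g = (Finset.univ.filter fun v =>
      Even (G.degree v) ∧ 0 < G.degree v).card) :
    ∃ L : List (Σ (a : Fin n) (b : Fin n), G.Walk a b),
      L.length ≤ u / 2 + 3 * g / 4 ∧ L.length ≤ 3 * n / 4 ∧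
      (∀ p ∈ L, p.2.2.IsPath) ∧
      List.Pairwise (fun p q => ∀ e ∈ p.2.2.edges, e ∉ q.2.2.edges) L ∧
      (∀ e : Sym2 (Fin n), e ∈ G.edgeSet ↔ ∃ p ∈ L, e ∈ p.2.2.edges) := by
  subst hu hg
  simpa only [Fintype.card_fin] using stmt_10_general G
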